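/- Let X be a Grothendieck category satisfying (AB4*) (products are exact), let Y be a localizing subcategory of X, and let π : X → X/Y be the quotient functor. Then the assignments Z ↦ π(Z) and 𝒵 ↦ (π^{-1}(𝒵))' restrict to mutually inverse bijections between the Y-closed subcategories of X and the closed subcategories of X/Y. -/

import Mathlib

open CategoryTheory CategoryTheory.Limits Opposite

universe v u

namespace Paper

variable {C : Type u} [Category.{v} C]

/-- An object `M` is compact if `Hom(M, -)` commutes with arbitrary (small) direct sums. -/
def IsCompactObj (M : C) : Prop :=
  ∀ ι : Type v, Nonempty (PreservesColimitsOfShape (Discrete ι) (coyoneda.obj (op M)))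

variable [Abelian C]

section
variable [HasColimits C]

/-- A full subcategory (given by its set of objects) is weakly closed if it is closed
under subobjects, quotient objects and arbitrary (small) direct sums. -/
structure IsWeaklyClosed (Z : Set C) : Prop where
  mem_of_mono : ∀ {A M : C} (f : A ⟶ M), Mono f → M ∈ Z → A ∈ Z
  mem_of_epi : ∀ {M B : C} (f : M ⟶ B), Epi f → M ∈ Z → B ∈ Z
  sigma_mem : ∀ {ι : Type v} (f : ι → C), (∀ i, f i ∈ Z) → (∐ f) ∈ Z

/-- Closure under arbitrary (small) products. -/
def ClosedUnderProducts [HasLimits C] (Z : Set C) : Prop :=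
  ∀ {ι : Type v} (f : ι → C), (∀ i, f i ∈ Z) → (∏ᶜ f) ∈ Z

/-- A closed subcategory: weakly closed and closed under products. -/
def IsClosedSub [HasLimits C] (Z : Set C) : Prop :=
  IsWeaklyClosed Z ∧ ClosedUnderProducts Z

/-- Closure under extensions. -/
def ClosedUnderExtensions (Y : Set C) : Prop :=
  ∀ S : ShortComplex C, S.ShortExact → S.X₁ ∈ Y → S.X₃ ∈ Y → S.X₂ ∈ Y

/-- A localizing subcategory: weakly closed and closed under extensions. -/
def IsLocalizing (Y : Set C) : Prop :=
  IsWeaklyClosed Y ∧ ClosedUnderExtensions Y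

/-- The full subcategory generated by a class of objects `G`: all quotient objects
of (small) direct sums of objects of `G`. -/
def generatedBy (G : Set C) : Set C :=
  { M | ∃ (ι : Type v) (f : ι → C), (∀ i, f i ∈ G) ∧ ∃ p : (∐ f) ⟶ M, Epi p }

end

/-- A filter of subobjects of an object: nonempty, upward closed, and closed under
finite intersections. -/
def IsFilterOn {O : C} (F : Set (Subobject O)) : Prop :=
  F.Nonempty ∧ (∀ {I J : Subobject O}, I ∈ F → I ≤ J → J ∈ F) ∧
    ∀ {I J : Subobject O}, I ∈ F → J ∈ F → I ⊓ J ∈ F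

/-- A principal filter consists of all subobjects containing a fixed one. -/
def IsPrincipalFilter {O : C} (F : Set (Subobject O)) : Prop :=
  ∃ I : Subobject O, F = { J | I ≤ J }

variable {A : Type v}

/-- A filter system in a family of objects. -/
def IsFilterSystem (O : A → C) (F : ∀ α, Set (Subobject (O α))) : Prop :=
  (∀ α, IsFilterOn (F α)) ∧
    ∀ (α β : A) (f : O α ⟶ O β), ∀ J ∈ F β, (Subobject.pullback f).obj J ∈ F α

/-- An ideal in a family of generators: a choice of subobject `I α ⊆ O α` for each `α`
such that `f (I α) ⊆ I β` for every morphism `f : O α ⟶ O β`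
(expressed as `I α ≤ f⁻¹ (I β)`). -/
def IsIdealIn (O : A → C) (I : ∀ α, Subobject (O α)) : Prop :=
  ∀ (α β : A) (f : O α ⟶ O β), I α ≤ (Subobject.pullback f).obj (I β)

/-- The quotient object `O/I` of `O` by a subobject `I`. -/
noncomputable def quotBy {O : C} (I : Subobject O) : C := cokernel I.arrow

/-- The weakly closed subcategory generated by the objects `O α / I`, `I ∈ F α`. -/
def wcOfFilterSystem [HasColimits C] (O : A → C) (F : ∀ α, Set (Subobject (O α))) : Set C :=
  generatedBy { M | ∃ (α : A) (I : Subobject (O α)), I ∈ F α ∧ Nonempty (quotBy I ≅ M) }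

/-- The filter system associated to a subcategory `Z`: `F α = {I | O α / I ∈ Z}`. -/
def filterOf (O : A → C) (Z : Set C) (α : A) : Set (Subobject (O α)) :=
  { I | quotBy I ∈ Z }

section QuotientCat

variable {D : Type u} [Category.{v} D]

/-- The image `π(Z)` of a subcategory, as a full subcategory of the target
(closed under isomorphism). -/
def imageSub (π : C ⥤ D) (Z : Set C) : Set D := { N | ∃ M ∈ Z, Nonempty (π.obj M ≅ N) }

/-- The preimage `π⁻¹(𝒵)` of a subcategory. -/
def preimageSub (π : C ⥤ D) (Z : Set D) : Set C := { M | π.obj M ∈ Z }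

/-- `M` is `Y`-torsionfree if it has no nonzero subobject belonging to `Y`. -/
def IsTorsionFree (Y : Set C) (M : C) : Prop :=
  ∀ (N : C) (f : N ⟶ M), Mono f → N ∈ Y → IsZero N

/-- `Z` is `Y`-essentially stable if `ωπ(M) ∈ Z` for all `M ∈ Z`. -/
def EssStable (π : C ⥤ D) (ω : D ⥤ C) (Z : Set C) : Prop :=
  ∀ M ∈ Z, ω.obj (π.obj M) ∈ Z

/-- `Z'`: the full subcategory generated by the `Y`-torsionfree objects of `Z`. -/
def torsPart [HasColimits C] (Y Z : Set C) : Set C :=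
  generatedBy { M | M ∈ Z ∧ IsTorsionFree Y M }

/-- `Z` is `Y`-torsionfree generated if every object of `Z` is a quotient of a direct sum
of `Y`-torsionfree objects of `Z`. -/
def TorsionfreeGenerated [HasColimits C] (Y Z : Set C) : Prop :=
  Z ⊆ torsPart Y Z

/-- `Z` is `Y`-weakly closed: weakly closed, `Y`-essentially stable
and `Y`-torsionfree generated. -/
def IsYWeaklyClosed [HasColimits C] (π : C ⥤ D) (ω : D ⥤ C) (Y Z : Set C) : Prop :=
  IsWeaklyClosed Z ∧ EssStable π ω Z ∧ TorsionfreeGenerated Y Z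

/-- `Z` is `Y`-closed: closed, `Y`-essentially stable and `Y`-torsionfree generated. -/
def IsYClosed [HasLimits C] [HasColimits C] (π : C ⥤ D) (ω : D ⥤ C) (Y Z : Set C) : Prop :=
  IsClosedSub Z ∧ EssStable π ω Z ∧ TorsionfreeGenerated Y Z

end QuotientCat

/-- The Gabriel product `Z * W`: all objects `P` fitting in a short exact sequence
`0 → M → P → N → 0` with `M ∈ W` and `N ∈ Z`. -/
def gabrielProd (Z W : Set C) : Set C :=
  { P | ∃ S : ShortComplex C, S.ShortExact ∧ S.X₁ ∈ W ∧ S.X₃ ∈ Z ∧ Nonempty (S.X₂ ≅ P) }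

/-- `Isat` is the `Y`-saturation of `I` inside `O`: the largest subobject `J ⊇ I`
with `J/I ∈ Y`; that is, `Isat/I = τ(O/I)`. -/
def IsSaturationOf (Y : Set C) {O : C} (I Isat : Subobject O) : Prop :=
  ∃ h : I ≤ Isat, cokernel (Subobject.ofLE I Isat h) ∈ Y ∧
    ∀ (J : Subobject O) (hJ : I ≤ J), cokernel (Subobject.ofLE I J hJ) ∈ Y → J ≤ Isat


/-- The subcategory generated by the objects `O α / I α` for an ideal `I`. -/
def wcOfIdeal [HasColimits C] (O : A → C) (I : ∀ α, Subobject (O α)) : Set C :=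
  generatedBy { M | ∃ α : A, Nonempty (quotBy (I α) ≅ M) }

/-- The union `Z₁ ∪ Z₂` of two weakly closed subcategories: explicitly, all
subquotients of objects `M ⊞ N` with `M ∈ Z₁` and `N ∈ Z₂`. -/
def unionWC (Z₁ Z₂ : Set C) : Set C :=
  { P | ∃ (M N Q : C) (i : Q ⟶ M ⊞ N) (p : Q ⟶ P), M ∈ Z₁ ∧ N ∈ Z₂ ∧ Mono i ∧ Epi p }

/-!
A `Y`-torsionfree object `M` embeds in `ωπ(M)` through the unit of the adjunction, since the
kernel of the unit lies in `Y`. Hence the torsionfree objects of `π⁻¹(𝒵)` are exactly the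
subobjects of the objects `ω(N)` with `N ∈ 𝒵`. As `ω` preserves products, they are closed under
subobjects and products, hence also under direct sums, because (AB5) embeds a direct sum in the
corresponding product. By (AB4*) the class of their quotients `(π⁻¹(𝒵))'` is then closed, and it
contains every `ω(N)`, so its image under `π` is `𝒵`.

Conversely, if `Z` is `Y`-closed, essential stability gives `N ∈ π(Z) ↔ ω(N) ∈ Z`. So `π(Z)` is
closed under products, and a torsionfree object `M` with `π(M) ∈ π(Z)` embeds in `ωπ(M) ∈ Z`:
the torsionfree objects of `π⁻¹(π(Z))` all lie in `Z`, which they generate.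
-/

section DirectSums

variable {E : Type*} [Category* E]

lemma mono_of_isColimit_of_mono_comp {J : Type*} [Category* J] [IsConnected J]
    [HasColimitsOfShape J E] [(colim : (J ⥤ E) ⥤ E).PreservesMonomorphisms]
    {F : J ⥤ E} {c : Cocone F} (hc : IsColimit c) {B : E} (g : c.pt ⟶ B)
    (hg : ∀ j, Mono (c.ι.app j ≫ g)) : Mono g := by
  have : Mono (c.extend g).ι :=
    have : ∀ j, Mono ((c.extend g).ι.app j) := hg
    NatTrans.mono_of_mono_app _
  exact colim.map_mono' (c.extend g).ι hc (isColimitConstCocone J B) g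
    fun j => (Category.comp_id _).symm

lemma epi_piMap {ι : Type*} [HasLimitsOfShape (Discrete ι) E]
    [(lim : (Discrete ι ⥤ E) ⥤ E).PreservesEpimorphisms] {f g : ι → E} (p : ∀ i, f i ⟶ g i)
    [∀ i, Epi (p i)] : Epi (Limits.Pi.map p) := by
  let φ : Discrete.functor f ⟶ Discrete.functor g := Discrete.natTrans fun i => p i.as
  have : ∀ i, Epi (φ.app i) := fun i => inferInstanceAs (Epi (p i.as))
  have : Epi φ := NatTrans.epi_of_epi_app φ
  exact (lim : (Discrete ι ⥤ E) ⥤ E).map_epi φ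

open Classical in
/-- The canonical morphism from a direct sum to the product of the same family. -/
noncomputable def sigmaToPi [HasZeroMorphisms E] {ι : Type*} (f : ι → E) [HasCoproduct f]
    [HasProduct f] : (∐ f) ⟶ ∏ᶜ f :=
  Sigma.desc (Limits.Pi.ι f)

lemma isIso_sigmaToPi_of_hasBiproduct [HasZeroMorphisms E] {ι : Type*} (f : ι → E)
    [HasBiproduct f] : IsIso (sigmaToPi f) := by
  have : sigmaToPi f = ((biproduct.isoCoproduct f).symm ≪≫ biproduct.isoProduct f).hom := by
    classical
    ext i j
    simp [sigmaToPi, biproduct.ι_π, Limits.Pi.ι_π]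
  rw [this]
  infer_instance

lemma sigmaToPi_restrict [HasZeroMorphisms E] {ι κ : Type*} (f : ι → E) [HasCoproduct f]
    [HasProduct f] (s : κ → ι) (hs : Function.Injective s) [HasCoproduct fun k => f (s k)]
    [HasProduct fun k => f (s k)] :
    Limits.Sigma.desc (fun k => Sigma.ι f (s k)) ≫ sigmaToPi f ≫
      Limits.Pi.map' s (fun k => 𝟙 (f (s k))) = sigmaToPi fun k => f (s k) := by
  classical
  ext k l
  by_cases h : k = l
  · subst h
    simp [sigmaToPi]
  · simp [sigmaToPi, Limits.Pi.ι_π_of_ne _ h, Limits.Pi.ι_π_of_ne _ (hs.ne h)]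

open CoproductsFromFiniteFiltered in
lemma mono_sigmaToPi [Preadditive E] [HasFiniteProducts E] {ι : Type*} (f : ι → E)
    [HasCoproduct f] [HasProduct f] [HasColimitsOfShape (Finset (Discrete ι)) E]
    [(colim : (Finset (Discrete ι) ⥤ E) ⥤ E).PreservesMonomorphisms] : Mono (sigmaToPi f) := by
  have : IsConnected (Finset (Discrete ι)) := IsFiltered.isConnected _
  have := HasFiniteBiproducts.of_hasFiniteProducts (C := E)
  -- A direct sum is the filtered colimit of its finite sub-sums, so it suffices to treat those.
  refine mono_of_isColimit_of_mono_comp (isColimitFiniteSubproductsCocone f) _ fun S => ?_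
  have := isIso_sigmaToPi_of_hasBiproduct fun i : S => f i.1.as
  have fac := sigmaToPi_restrict f (fun i : S => i.1.as)
    fun i j h => Subtype.ext (Discrete.ext h)
  have : Mono (Limits.Sigma.desc (fun i : S => Sigma.ι f i.1.as) ≫ sigmaToPi f) :=
    mono_of_mono_fac ((Category.assoc _ _ _).trans fac)
  exact this

end DirectSums

section Generation

variable {X : Type u} [Category.{v} X]

/-- Closure of a class of objects under subobjects. -/
def ClosedUnderSubobjects (G : Set X) : Prop :=
  ∀ {A M : X} (f : A ⟶ M), Mono f → M ∈ G → A ∈ G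

/-- Closure of a class of objects under arbitrary (small) direct sums. -/
def ClosedUnderDirectSums [HasColimits X] (G : Set X) : Prop :=
  ∀ {ι : Type v} (f : ι → X), (∀ i, f i ∈ G) → (∐ f) ∈ G

variable [HasColimits X] {G H Z : Set X}

lemma IsWeaklyClosed.mem_of_iso (hZ : IsWeaklyClosed Z) {M N : X} (e : M ≅ N) (hM : M ∈ Z) :
    N ∈ Z :=
  hZ.mem_of_mono e.inv inferInstance hM

lemma subset_generatedBy : G ⊆ generatedBy G := fun M hM =>
  ⟨PUnit, fun _ => M, fun _ => hM, Sigma.desc fun _ => 𝟙 M,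
    epi_of_epi_fac (Sigma.ι_desc (fun _ => 𝟙 M) PUnit.unit)⟩

lemma generatedBy_mono (h : G ⊆ H) : generatedBy G ⊆ generatedBy H :=
  fun _ ⟨ι, f, hf, hp⟩ => ⟨ι, f, fun i => h (hf i), hp⟩

lemma IsWeaklyClosed.generatedBy_subset (hZ : IsWeaklyClosed Z) (h : G ⊆ Z) :
    generatedBy G ⊆ Z :=
  fun _ ⟨_, f, hf, p, hp⟩ => hZ.mem_of_epi p hp (hZ.sigma_mem f fun i => h (hf i))

lemma mem_generatedBy_of_epi {M N : X} (q : M ⟶ N) [Epi q] (hM : M ∈ generatedBy G) :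
    N ∈ generatedBy G :=
  let ⟨ι, f, hf, p, _⟩ := hM
  ⟨ι, f, hf, p ≫ q, epi_comp p q⟩

lemma mem_generatedBy_iff_exists_epi (hsum : ClosedUnderDirectSums G) {M : X} :
    M ∈ generatedBy G ↔ ∃ A ∈ G, ∃ p : A ⟶ M, Epi p :=
  ⟨fun ⟨_, f, hf, hp⟩ => ⟨∐ f, hsum f hf, hp⟩,
    fun ⟨_, hA, p, _⟩ => mem_generatedBy_of_epi p (subset_generatedBy hA)⟩

variable [Abelian X]

lemma isWeaklyClosed_generatedBy (hsub : ClosedUnderSubobjects G)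
    (hsum : ClosedUnderDirectSums G) : IsWeaklyClosed (generatedBy G) where
  mem_of_mono f _ hM := by
    obtain ⟨A, hA, p, _⟩ := (mem_generatedBy_iff_exists_epi hsum).1 hM
    exact (mem_generatedBy_iff_exists_epi hsum).2
      ⟨pullback p f, hsub (pullback.fst p f) inferInstance hA, pullback.snd p f, inferInstance⟩
  mem_of_epi f _ hM := mem_generatedBy_of_epi f hM
  sigma_mem f hf := by
    choose A hA p _ using fun i => (mem_generatedBy_iff_exists_epi hsum).1 (hf i)
    exact (mem_generatedBy_iff_exists_epi hsum).2
      ⟨∐ A, hsum A hA, Limits.Sigma.map p, inferInstance⟩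

lemma closedUnderProducts_generatedBy [HasLimits X] [AB4Star X]
    (hsum : ClosedUnderDirectSums G) (hprod : ClosedUnderProducts G) :
    ClosedUnderProducts (generatedBy G) := by
  intro ι f hf
  choose A hA p _ using fun i => (mem_generatedBy_iff_exists_epi hsum).1 (hf i)
  exact (mem_generatedBy_iff_exists_epi hsum).2 ⟨∏ᶜ A, hprod A hA, Limits.Pi.map p, epi_piMap p⟩

lemma isClosedSub_generatedBy [HasLimits X] [AB5 X] [AB4Star X]
    (hsub : ClosedUnderSubobjects G) (hprod : ClosedUnderProducts G) :
    IsClosedSub (generatedBy G) :=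
  have hsum : ClosedUnderDirectSums G := fun f hf =>
    hsub (sigmaToPi f) (mono_sigmaToPi f) (hprod f hf)
  ⟨isWeaklyClosed_generatedBy hsub hsum, closedUnderProducts_generatedBy hsum hprod⟩

end Generation

section QuotientFunctor

variable {X : Type u} [Category.{v} X] {D : Type u} [Category.{v} D] {π : X ⥤ D} {ω : D ⥤ X}
  {Z : Set X} {W : Set D}

lemma IsWeaklyClosed.preimageSub [HasColimits X] [HasColimits D] [PreservesFiniteLimits π]
    (adj : π ⊣ ω) (hW : IsWeaklyClosed W) : IsWeaklyClosed (preimageSub π W) where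
  mem_of_mono f _ hM := hW.mem_of_mono (π.map f) inferInstance hM
  mem_of_epi f _ hM :=
    have := adj.isLeftAdjoint
    hW.mem_of_epi (π.map f) inferInstance hM
  sigma_mem f hf :=
    have : PreservesColimitsOfSize.{v, v} π := adj.leftAdjoint_preservesColimits
    hW.mem_of_iso (PreservesCoproduct.iso π f).symm (hW.sigma_mem _ hf)

lemma mem_imageSub_iff [HasColimits X] [ω.Full] [ω.Faithful] (adj : π ⊣ ω)
    (hZ : IsWeaklyClosed Z) (hst : EssStable π ω Z) {N : D} :
    N ∈ imageSub π Z ↔ ω.obj N ∈ Z :=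
  ⟨fun ⟨M, hM, ⟨e⟩⟩ => hZ.mem_of_iso (ω.mapIso e) (hst M hM),
    fun hN => ⟨ω.obj N, hN, ⟨asIso (adj.counit.app N)⟩⟩⟩

lemma IsClosedSub.closedUnderProducts_imageSub [HasLimits X] [HasColimits X] [HasLimits D]
    [ω.Full] [ω.Faithful] (adj : π ⊣ ω) (hZ : IsClosedSub Z) (hst : EssStable π ω Z) :
    ClosedUnderProducts (imageSub π Z) := by
  have : PreservesLimitsOfSize.{v, v} ω := adj.rightAdjoint_preservesLimits
  intro ι f hf
  simp only [mem_imageSub_iff adj hZ.1 hst] at hf ⊢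
  exact hZ.1.mem_of_iso (PreservesProduct.iso ω f).symm (hZ.2 _ hf)

lemma IsWeaklyClosed.closedUnderDirectSums_imageSub [HasColimits X] [HasColimits D] (adj : π ⊣ ω)
    (hZ : IsWeaklyClosed Z) : ClosedUnderDirectSums (imageSub π Z) := by
  have : PreservesColimitsOfSize.{v, v} π := adj.leftAdjoint_preservesColimits
  intro ι f hf
  choose M hM e using hf
  exact ⟨∐ M, hZ.sigma_mem M hM,
    ⟨PreservesCoproduct.iso π M ≪≫ Limits.Sigma.mapIso fun i => (e i).some⟩⟩

lemma IsWeaklyClosed.closedUnderSubobjects_imageSub [HasPullbacks X] [HasColimits X]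
    [PreservesFiniteLimits π] [ω.Full] [ω.Faithful] (adj : π ⊣ ω) (hZ : IsWeaklyClosed Z) :
    ClosedUnderSubobjects (imageSub π Z) := by
  have := adj.isRightAdjoint
  rintro A N f _ ⟨M, hM, ⟨e⟩⟩
  let η : M ⟶ ω.obj N := adj.homEquiv M N e.hom
  have fac : π.map η ≫ adj.counit.app N = e.hom :=
    (adj.homEquiv_counit M N η).symm.trans (Equiv.symm_apply_apply _ _)
  have : IsIso (π.map η ≫ adj.counit.app N) := fac ▸ inferInstance
  have : IsIso (π.map η) := IsIso.of_isIso_comp_right _ (adj.counit.app N)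
  have : IsIso (π.map (pullback.snd η (ω.map f))) :=
    ((IsPullback.of_hasPullback η (ω.map f)).map π).isIso_snd_of_isIso
  exact ⟨pullback η (ω.map f), hZ.mem_of_mono (pullback.fst η (ω.map f)) inferInstance hM,
    ⟨asIso (π.map (pullback.snd η (ω.map f)) ≫ adj.counit.app A)⟩⟩

variable [Abelian X] [Abelian D]

lemma IsWeaklyClosed.mem_imageSub_of_epi [HasColimits X] [PreservesFiniteLimits π] [ω.Full]
    [ω.Faithful] (adj : π ⊣ ω) (hZ : IsWeaklyClosed Z) {N B : D} (f : N ⟶ B) [Epi f]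
    (hN : N ∈ imageSub π Z) : B ∈ imageSub π Z := by
  obtain ⟨M, hM, ⟨e⟩⟩ := hN
  let g : M ⟶ ω.obj B := adj.homEquiv M B (e.hom ≫ f)
  let q : π.obj (image g) ⟶ B := π.map (image.ι g) ≫ adj.counit.app B
  have fac : π.map (factorThruImage g) ≫ q = e.hom ≫ f := by
    rw [← Category.assoc, ← π.map_comp, image.fac, ← adj.homEquiv_counit, Equiv.symm_apply_apply]
  have : Epi (π.map (factorThruImage g) ≫ q) := fac ▸ inferInstance
  have : Epi q := epi_of_epi (π.map (factorThruImage g)) q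
  have : IsIso q := isIso_of_mono_of_epi q
  exact ⟨image g, hZ.mem_of_epi (factorThruImage g) inferInstance hM, ⟨asIso q⟩⟩

lemma IsWeaklyClosed.imageSub [HasColimits X] [HasColimits D] [PreservesFiniteLimits π]
    [ω.Full] [ω.Faithful] (adj : π ⊣ ω) (hZ : IsWeaklyClosed Z) :
    IsWeaklyClosed (imageSub π Z) where
  mem_of_mono := hZ.closedUnderSubobjects_imageSub adj
  mem_of_epi f _ := hZ.mem_imageSub_of_epi adj f
  sigma_mem := hZ.closedUnderDirectSums_imageSub adj

end QuotientFunctor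

section TorsionFree

variable {X : Type u} [Category.{v} X] {Y Z : Set X}

/-- The `Y`-torsionfree objects of `Z`, which generate `Z' = torsPart Y Z`. -/
def torsionFreeIn (Y Z : Set X) : Set X := { M | M ∈ Z ∧ IsTorsionFree Y M }

lemma torsionFreeIn_mono {Z₁ Z₂ : Set X} (h : Z₁ ⊆ Z₂) :
    torsionFreeIn Y Z₁ ⊆ torsionFreeIn Y Z₂ :=
  fun _ hM => ⟨h hM.1, hM.2⟩

lemma ClosedUnderSubobjects.torsionFreeIn (hZ : ClosedUnderSubobjects Z) :
    ClosedUnderSubobjects (torsionFreeIn Y Z) :=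
  fun f hf hM => ⟨hZ f hf hM.1, fun T g _ => hM.2 T (g ≫ f) (mono_comp g f)⟩

lemma torsionfreeGenerated_torsPart [HasColimits X] (Y Z : Set X) :
    TorsionfreeGenerated Y (torsPart Y Z) :=
  generatedBy_mono fun _ hM => ⟨subset_generatedBy hM, hM.2⟩

lemma IsWeaklyClosed.torsPart_subset [HasColimits X] (hZ : IsWeaklyClosed Z) :
    torsPart Y Z ⊆ Z :=
  hZ.generatedBy_subset fun _ hM => hM.1

variable {D : Type u} [Category.{v} D] {π : X ⥤ D} {ω : D ⥤ X}

lemma isTorsionFree_of_mono_section [HasZeroMorphisms X] (adj : π ⊣ ω)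
    (hY : ∀ T ∈ Y, IsZero (π.obj T)) {M : X} {N : D} (g : M ⟶ ω.obj N) [Mono g] :
    IsTorsionFree Y M := by
  intro T f _ hT
  have hfg : f ≫ g = 0 := (adj.homEquiv T N).symm.injective ((hY T hT).eq_of_src _ _)
  exact IsZero.of_mono_eq_zero f (by rw [← cancel_mono g, hfg, zero_comp])

variable [Abelian X] [Abelian D] [PreservesFiniteLimits π] [ω.Full] [ω.Faithful]

lemma IsTorsionFree.mono_unit (adj : π ⊣ ω) (hY : ∀ T : X, IsZero (π.obj T) → T ∈ Y)
    {M : X} (hM : IsTorsionFree Y M) : Mono (adj.unit.app M) := by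
  have := adj.isLeftAdjoint
  have hπι : π.map (kernel.ι (adj.unit.app M)) = 0 := by
    rw [← cancel_mono (π.map (adj.unit.app M)), ← π.map_comp, kernel.condition, π.map_zero,
      zero_comp]
  have hker : IsZero (kernel (adj.unit.app M)) :=
    hM _ (kernel.ι (adj.unit.app M)) inferInstance (hY _ (IsZero.of_mono_eq_zero _ hπι))
  exact Preadditive.mono_of_kernel_zero (hker.eq_of_src _ _)

variable [HasColimits D] {W : Set D}

lemma mem_torsionFreeIn_preimageSub_iff (adj : π ⊣ ω) (hY : ∀ M : X, M ∈ Y ↔ IsZero (π.obj M))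
    (hW : IsWeaklyClosed W) {M : X} :
    M ∈ torsionFreeIn Y (preimageSub π W) ↔ ∃ N ∈ W, ∃ g : M ⟶ ω.obj N, Mono g := by
  constructor
  · rintro ⟨hM, htf⟩
    exact ⟨π.obj M, hM, adj.unit.app M, htf.mono_unit adj fun T => (hY T).2⟩
  · rintro ⟨N, hN, g, _⟩
    exact ⟨hW.mem_of_mono (π.map g ≫ adj.counit.app N) (mono_comp _ _) hN,
      isTorsionFree_of_mono_section adj (fun T => (hY T).1) g⟩

lemma section_mem_torsPart_preimageSub [HasColimits X] (adj : π ⊣ ω)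
    (hY : ∀ M : X, M ∈ Y ↔ IsZero (π.obj M)) (hW : IsWeaklyClosed W) {N : D} (hN : N ∈ W) :
    ω.obj N ∈ torsPart Y (preimageSub π W) :=
  subset_generatedBy
    ((mem_torsionFreeIn_preimageSub_iff adj hY hW).2 ⟨N, hN, 𝟙 _, inferInstance⟩)

lemma closedUnderProducts_torsionFreeIn_preimageSub [HasLimits X] [HasLimits D] (adj : π ⊣ ω)
    (hY : ∀ M : X, M ∈ Y ↔ IsZero (π.obj M)) (hW : IsClosedSub W) :
    ClosedUnderProducts (torsionFreeIn Y (preimageSub π W)) := by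
  have : PreservesLimitsOfSize.{v, v} ω := adj.rightAdjoint_preservesLimits
  intro ι f hf
  choose N hN g _ using fun i => (mem_torsionFreeIn_preimageSub_iff adj hY hW.1).1 (hf i)
  exact (mem_torsionFreeIn_preimageSub_iff adj hY hW.1).2
    ⟨∏ᶜ N, hW.2 N hN, Limits.Pi.map g ≫ (PreservesProduct.iso ω N).inv, mono_comp _ _⟩

end TorsionFree

section Correspondence

variable {X : Type u} [Category.{v} X] [Abelian X] [HasColimits X]
  {D : Type u} [Category.{v} D] [Abelian D]
  {Y : Set X} {π : X ⥤ D} {ω : D ⥤ X} [PreservesFiniteLimits π] [ω.Full] [ω.Faithful]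

lemma IsYWeaklyClosed.torsPart_preimageSub_imageSub (adj : π ⊣ ω)
    (hY : ∀ M : X, IsZero (π.obj M) → M ∈ Y) {Z : Set X} (hZ : IsYWeaklyClosed π ω Y Z) :
    torsPart Y (preimageSub π (imageSub π Z)) = Z := by
  obtain ⟨hwc, hst, hgen⟩ := hZ
  apply Set.Subset.antisymm
  · refine hwc.generatedBy_subset fun M ⟨hM, htf⟩ => ?_
    exact hwc.mem_of_mono (adj.unit.app M) (htf.mono_unit adj hY)
      ((mem_imageSub_iff adj hwc hst).1 hM)
  · have hsub : Z ⊆ preimageSub π (imageSub π Z) := fun M hM => ⟨M, hM, ⟨Iso.refl _⟩⟩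
    exact hgen.trans (generatedBy_mono (torsionFreeIn_mono hsub))

variable [HasColimits D]

lemma IsYClosed.imageSub [HasLimits X] [HasLimits D] (adj : π ⊣ ω) {Z : Set X}
    (hZ : IsYClosed π ω Y Z) : IsClosedSub (imageSub π Z) :=
  ⟨hZ.1.1.imageSub adj, hZ.1.closedUnderProducts_imageSub adj hZ.2.1⟩

lemma isYClosed_torsPart_preimageSub [HasLimits X] [AB5 X] [AB4Star X] [HasLimits D]
    (adj : π ⊣ ω) (hY : ∀ M : X, M ∈ Y ↔ IsZero (π.obj M)) {W : Set D} (hW : IsClosedSub W) :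
    IsYClosed π ω Y (torsPart Y (preimageSub π W)) := by
  have hπW : IsWeaklyClosed (preimageSub π W) := hW.1.preimageSub adj
  have hsub : ClosedUnderSubobjects (torsionFreeIn Y (preimageSub π W)) :=
    ClosedUnderSubobjects.torsionFreeIn hπW.mem_of_mono
  exact ⟨isClosedSub_generatedBy hsub (closedUnderProducts_torsionFreeIn_preimageSub adj hY hW),
    fun M hM => section_mem_torsPart_preimageSub adj hY hW.1 (hπW.torsPart_subset hM),
    torsionfreeGenerated_torsPart Y _⟩

lemma imageSub_torsPart_preimageSub (adj : π ⊣ ω) (hY : ∀ M : X, M ∈ Y ↔ IsZero (π.obj M))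
    {W : Set D} (hW : IsWeaklyClosed W) : imageSub π (torsPart Y (preimageSub π W)) = W := by
  apply Set.Subset.antisymm
  · rintro N ⟨M, hM, ⟨e⟩⟩
    exact hW.mem_of_iso e ((hW.preimageSub adj).torsPart_subset hM)
  · intro N hN
    exact ⟨ω.obj N, section_mem_torsPart_preimageSub adj hY hW hN,
      ⟨asIso (adj.counit.app N)⟩⟩

theorem statement_11_general [HasLimits X] [AB5 X] [AB4Star X] [HasLimits D] (adj : π ⊣ ω)
    (hker : ∀ M : X, M ∈ Y ↔ IsZero (π.obj M)) :
    (∀ Z : Set X, IsYClosed π ω Y Z →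
      IsClosedSub (imageSub π Z) ∧ torsPart Y (preimageSub π (imageSub π Z)) = Z) ∧
    (∀ 𝒵 : Set D, IsClosedSub 𝒵 →
      IsYClosed π ω Y (torsPart Y (preimageSub π 𝒵)) ∧
        imageSub π (torsPart Y (preimageSub π 𝒵)) = 𝒵) :=
  ⟨fun _ hZ => ⟨hZ.imageSub adj,
      IsYWeaklyClosed.torsPart_preimageSub_imageSub adj (fun M => (hker M).2)
        ⟨hZ.1.1, hZ.2⟩⟩,
    fun _ h𝒵 => ⟨isYClosed_torsPart_preimageSub adj hker h𝒵,
      imageSub_torsPart_preimageSub adj hker h𝒵.1⟩⟩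

end Correspondence

/-- If `X` satisfies (AB4*), the assignments `Z ↦ π(Z)` and
`𝒵 ↦ (π⁻¹(𝒵))'` restrict to mutually inverse bijections between `Y`-closed
subcategories of `X` and closed subcategories of `X/Y`. -/
theorem statement_11 {X : Type u} [Category.{v} X] [Abelian X]
    [HasLimits X] [HasColimits X] [HasFilteredColimits X] [AB5 X]
    [HasProducts X] [AB4Star X]
    (hgen : ∃ G : X, IsSeparator G)
    {D : Type u} [Category.{v} D] [Abelian D] [HasLimits D] [HasColimits D]
    (Y : Set X) (hYloc : IsLocalizing Y)
    (π : X ⥤ D) (ω : D ⥤ X) (adj : π ⊣ ω) [PreservesFiniteLimits π]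
    [ω.Full] [ω.Faithful]
    (hker : ∀ M : X, M ∈ Y ↔ IsZero (π.obj M)) :
    (∀ Z : Set X, IsYClosed π ω Y Z →
      IsClosedSub (imageSub π Z) ∧ torsPart Y (preimageSub π (imageSub π Z)) = Z) ∧
    (∀ 𝒵 : Set D, IsClosedSub 𝒵 →
      IsYClosed π ω Y (torsPart Y (preimageSub π 𝒵)) ∧
        imageSub π (torsPart Y (preimageSub π 𝒵)) = 𝒵) :=
  statement_11_general adj hker

end Paper
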